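/- Let f : 𝕋^d → ℝ be in the Wiener algebra (absolutely convergent Fourier series) with f(𝕋^d) ⊂ (0,1). Then the composition g = m ∘ f, with m(z) = log((1−z)/z), is again in the Wiener algebra, g is real-valued, and f(k) = (1 + e^{g(k)})^{−1} for all k. -/

import Mathlib

open scoped BigOperators
open Complex Set

/-!
Absolutely convergent Fourier series on a torus form the convolution algebra `ℓ¹(ℤ^ι)`, and the
points of the torus are exactly its characters: a character restricts to a group homomorphism
`ℤ^ι → Circle`, which is determined by its values on the standard basis. In a commutative Banach
algebra whose characters keep `a` in the slit plane, the segment from `1` to `a` consists of units,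
so `(a - 1) * ∫ t in 0..1, (1 + t (a - 1))⁻¹` makes sense, and every character `φ` sends it to
`log (φ a)`. Applied to `(1 - F) / F`, where `F ∈ ℓ¹(ℤ^ι)` has Fourier series `f`, this produces
the Fourier coefficients of `log ((1 - f) / f)`.
-/

theorem map_ringInverse_of_isUnit {M N F : Type*} [MonoidWithZero M] [DivisionMonoid N]
    [FunLike F M N] [MonoidHomClass F M N] (φ : F) {a : M} (ha : IsUnit a) :
    φ (Ring.inverse a) = (φ a)⁻¹ :=
  eq_inv_of_mul_eq_one_left <| by rw [← map_mul, Ring.inverse_mul_cancel a ha, map_one]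

section Gelfand

open WeakDual

variable {A : Type*} [NormedCommRing A] [NormedAlgebra ℂ A] [CompleteSpace A]

theorem isUnit_of_forall_character_ne_zero {a : A} (ha : ∀ φ : characterSpace ℂ A, φ a ≠ 0) :
    IsUnit a := by
  by_contra h
  obtain ⟨φ, hφ⟩ := CharacterSpace.exists_apply_eq_zero h
  exact ha φ hφ

theorem exists_forall_character_eq_log {a : A}
    (ha : ∀ φ : characterSpace ℂ A, φ a ∈ slitPlane) :
    ∃ b : A, ∀ φ : characterSpace ℂ A, φ b = log (φ a) := by
  let path (t : ℝ) : A := 1 + t • (a - 1)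
  have apply_path (φ : characterSpace ℂ A) (t : ℝ) : φ (path t) = 1 + t • (φ a - 1) := by
    simp [path, map_real_smul φ (map_continuous φ)]
  have isUnit_path {t : ℝ} (ht : t ∈ Icc 0 1) : IsUnit (path t) :=
    isUnit_of_forall_character_ne_zero fun φ => by
      rw [apply_path]
      exact slitPlane_ne_zero <|
        starConvex_one_slitPlane.add_smul_mem (by simpa using ha φ) ht.1 ht.2
  have continuousOn_inverse : ContinuousOn (fun t => Ring.inverse (path t)) (Icc 0 1) :=
    fun t ht => by
      obtain ⟨u, hu⟩ := isUnit_path ht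
      have hpath : Continuous path := by fun_prop
      exact (ContinuousAt.comp (hu ▸ NormedRing.inverse_continuousAt u)
        hpath.continuousAt).continuousWithinAt
  refine ⟨(a - 1) * ∫ t in (0 : ℝ)..1, Ring.inverse (path t), fun φ => ?_⟩
  calc φ ((a - 1) * ∫ t in (0 : ℝ)..1, Ring.inverse (path t))
      = (φ a - 1) * ∫ t in (0 : ℝ)..1, φ (Ring.inverse (path t)) := by
        rw [map_mul, map_sub, map_one]
        congr 1
        exact ((CharacterSpace.toCLM φ).intervalIntegral_comp_comm
          (continuousOn_inverse.intervalIntegrable_of_Icc zero_le_one)).symm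
    _ = (φ a - 1) * ∫ t in (0 : ℝ)..1, (1 + t • (φ a - 1))⁻¹ := by
        congr 1
        refine intervalIntegral.integral_congr fun t ht => ?_
        rw [uIcc_of_le zero_le_one] at ht
        simp only [map_ringInverse_of_isUnit φ (isUnit_path ht), apply_path]
    _ = log (φ a) := by
        rw [← log_eq_integral (by simpa using ha φ), add_sub_cancel]

theorem exists_forall_character_eq_log_one_sub_div {a : A}
    (ha : ∀ φ : characterSpace ℂ A, (1 - φ a) / φ a ∈ slitPlane) :
    ∃ b : A, ∀ φ : characterSpace ℂ A, φ b = log ((1 - φ a) / φ a) := by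
  have ha_unit : IsUnit a :=
    isUnit_of_forall_character_ne_zero fun φ => (div_ne_zero_iff.1 (slitPlane_ne_zero (ha φ))).2
  have apply_quotient (φ : characterSpace ℂ A) :
      φ ((1 - a) * Ring.inverse a) = (1 - φ a) / φ a := by
    rw [map_mul, map_sub, map_one, map_ringInverse_of_isUnit φ ha_unit, div_eq_mul_inv]
  simpa only [apply_quotient] using
    exists_forall_character_eq_log (a := (1 - a) * Ring.inverse a) (by simpa only [apply_quotient])

end Gelfand

/-- The Banach space `ℓ¹(G)`, as a type of its own so that its multiplication can be convolution. -/
def EllOneAlgebra (𝕜 G : Type*) [NormedField 𝕜] : Type _ := lp (fun _ : G => 𝕜) 1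

namespace EllOneAlgebra

section BanachSpace

variable {𝕜 G : Type*} [NormedField 𝕜]

noncomputable instance : NormedAddCommGroup (EllOneAlgebra 𝕜 G) :=
  inferInstanceAs (NormedAddCommGroup (lp (fun _ : G => 𝕜) 1))

noncomputable instance : NormedSpace 𝕜 (EllOneAlgebra 𝕜 G) :=
  inferInstanceAs (NormedSpace 𝕜 (lp (fun _ : G => 𝕜) 1))

instance [CompleteSpace 𝕜] : CompleteSpace (EllOneAlgebra 𝕜 G) :=
  inferInstanceAs (CompleteSpace (lp (fun _ : G => 𝕜) 1))

instance : FunLike (EllOneAlgebra 𝕜 G) G 𝕜 where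
  coe a := a.1
  coe_injective := Subtype.val_injective

theorem add_apply (a b : EllOneAlgebra 𝕜 G) (x : G) : (a + b) x = a x + b x := rfl

theorem smul_apply (c : 𝕜) (a : EllOneAlgebra 𝕜 G) (x : G) : (c • a) x = c * a x := rfl

theorem hasSum_norm (a : EllOneAlgebra 𝕜 G) : HasSum (fun x => ‖a x‖) ‖a‖ := by
  have h := lp.hasSum_norm (E := fun _ : G => 𝕜) (p := 1) (by norm_num) a
  simp only [ENNReal.toReal_one, Real.rpow_one] at h
  exact h

/-- The function in `ℓ¹(G)` with the summable values `a`. -/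
def ofSummable (a : G → 𝕜) (ha : Summable fun x => ‖a x‖) : EllOneAlgebra 𝕜 G :=
  ⟨a, memℓp_gen (by simpa only [ENNReal.toReal_one, Real.rpow_one] using ha)⟩

open Classical in
/-- The basis element of `ℓ¹(G)` supported at `x`, with value `1` there. -/
noncomputable def of (x : G) : EllOneAlgebra 𝕜 G :=
  lp.single (E := fun _ : G => 𝕜) 1 x 1

theorem of_apply_self (x : G) : (of x : EllOneAlgebra 𝕜 G) x = 1 := by
  classical exact Pi.single_eq_same (M := fun _ : G => 𝕜) x 1

theorem of_apply_of_ne {x y : G} (h : y ≠ x) : (of x : EllOneAlgebra 𝕜 G) y = 0 := by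
  classical exact Pi.single_eq_of_ne (M := fun _ : G => 𝕜) h 1

@[simp]
theorem norm_of (x : G) : ‖(of x : EllOneAlgebra 𝕜 G)‖ = 1 := by
  classical exact (lp.norm_single (E := fun _ : G => 𝕜) one_pos x 1).trans norm_one

theorem hasSum_smul_of (a : EllOneAlgebra 𝕜 G) : HasSum (fun x => a x • of x) a := by
  classical
  refine (lp.hasSum_single (E := fun _ : G => 𝕜) ENNReal.one_ne_top a).congr_fun fun x => ?_
  refine (lp.single_smul (E := fun _ : G => 𝕜) 1 x (a x) 1).symm.trans ?_
  rw [smul_eq_mul, mul_one]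
  rfl

@[ext]
theorem clm_ext {E : Type*} [AddCommMonoid E] [TopologicalSpace E] [Module 𝕜 E] [T2Space E]
    {S T : EllOneAlgebra 𝕜 G →L[𝕜] E} (h : ∀ x, S (of x) = T (of x)) : S = T := by
  refine ContinuousLinearMap.ext fun a => ?_
  have hS := a.hasSum_smul_of.mapL S
  have hT := a.hasSum_smul_of.mapL T
  simp only [map_smul, h] at hS hT
  exact hS.unique hT

end BanachSpace

section Lift

variable {𝕜 G E : Type*} [NormedAddCommGroup E]

section NormedField

variable [NormedField 𝕜] [NormedSpace 𝕜 E] {v : G → E} {C : ℝ}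

theorem norm_smul_le_mul (a : EllOneAlgebra 𝕜 G) (hv : ∀ x, ‖v x‖ ≤ C) (x : G) :
    ‖a x • v x‖ ≤ ‖a x‖ * C :=
  norm_smul (a x) (v x) ▸ mul_le_mul_of_nonneg_left (hv x) (norm_nonneg _)

theorem summable_smul [CompleteSpace E] (a : EllOneAlgebra 𝕜 G) (hv : ∀ x, ‖v x‖ ≤ C) :
    Summable fun x => a x • v x :=
  .of_norm_bounded (a.hasSum_norm.summable.mul_right C) (a.norm_smul_le_mul hv)

theorem norm_tsum_smul_le (a : EllOneAlgebra 𝕜 G) (hv : ∀ x, ‖v x‖ ≤ C) :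
    ‖∑' x, a x • v x‖ ≤ C * ‖a‖ :=
  mul_comm C ‖a‖ ▸ tsum_of_norm_bounded (a.hasSum_norm.mul_right C) (a.norm_smul_le_mul hv)

/-- The continuous linear map with `of x ↦ v x` for a bounded family `v`, i.e. the universal
property of `ℓ¹(G)` among Banach spaces. -/
noncomputable def lift [CompleteSpace E] (v : G → E) (hv : ∀ x, ‖v x‖ ≤ C) :
    EllOneAlgebra 𝕜 G →L[𝕜] E :=
  LinearMap.mkContinuous
    { toFun a := ∑' x, a x • v x
      map_add' a b := by
        simp only [add_apply, add_smul, (a.summable_smul hv).tsum_add (b.summable_smul hv)]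
      map_smul' c a := by
        simp only [smul_apply, mul_smul, (a.summable_smul hv).tsum_const_smul c, RingHom.id_apply] }
    C fun a => a.norm_tsum_smul_le hv

@[simp]
theorem lift_of [CompleteSpace E] (hv : ∀ x, ‖v x‖ ≤ C) (x : G) :
    lift (𝕜 := 𝕜) v hv (of x) = v x := by
  refine (tsum_eq_single x fun y hy => ?_).trans ?_
  · rw [of_apply_of_ne hy, zero_smul]
  · rw [of_apply_self, one_smul]

end NormedField

theorem norm_lift_le [NontriviallyNormedField 𝕜] [NormedSpace 𝕜 E] [CompleteSpace E]
    {v : G → E} {C : ℝ} (hC : 0 ≤ C) (hv : ∀ x, ‖v x‖ ≤ C) : ‖lift (𝕜 := 𝕜) v hv‖ ≤ C :=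
  LinearMap.mkContinuous_norm_le _ hC _

end Lift

section Convolution

variable {𝕜 G : Type*} [NontriviallyNormedField 𝕜] [CompleteSpace 𝕜]

/-- Convolution on `ℓ¹(G)`, as the bilinear extension of `of x, of y ↦ of (x + y)`. -/
noncomputable def convolution [Add G] :
    EllOneAlgebra 𝕜 G →L[𝕜] EllOneAlgebra 𝕜 G →L[𝕜] EllOneAlgebra 𝕜 G :=
  lift (fun x => lift (fun y => of (x + y)) fun y => (norm_of (x + y)).le)
    fun _ => norm_lift_le zero_le_one _

@[simp]
theorem convolution_of_of [Add G] (x y : G) :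
    convolution (of x) (of y) = (of (x + y) : EllOneAlgebra 𝕜 G) := by
  rw [convolution, lift_of, lift_of]

theorem norm_convolution_le [Add G] : ‖(convolution (𝕜 := 𝕜) (G := G))‖ ≤ 1 :=
  norm_lift_le zero_le_one _

theorem lift_convolution [Add G] {B : Type*} [NormedRing B] [NormedAlgebra 𝕜 B] [CompleteSpace B]
    {v : G → B} {C : ℝ} (hv : ∀ x, ‖v x‖ ≤ C) (v_add : ∀ x y, v (x + y) = v x * v y)
    (a b : EllOneAlgebra 𝕜 G) :
    lift v hv (convolution a b) = lift v hv a * lift v hv b := by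
  have h : (ContinuousLinearMap.compL 𝕜 (EllOneAlgebra 𝕜 G) (EllOneAlgebra 𝕜 G) B
        (lift v hv)).comp convolution =
      (ContinuousLinearMap.mul 𝕜 B).bilinearComp (lift v hv) (lift v hv) := by
    ext x y
    simp [v_add]
  exact congr($h a b)

-- Associativity says that `a ↦ convolution a` turns convolution into composition of operators.
theorem convolution_assoc [AddSemigroup G] (a b c : EllOneAlgebra 𝕜 G) :
    convolution (convolution a b) c = convolution a (convolution b c) := by
  let v (x : G) : EllOneAlgebra 𝕜 G →L[𝕜] EllOneAlgebra 𝕜 G := convolution (of x)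
  have norm_v (x : G) : ‖v x‖ ≤ 1 := by
    simp only [v, convolution, lift_of]
    exact norm_lift_le zero_le_one _
  have v_add (x y : G) : v (x + y) = v x * v y := by
    ext z
    simp [v, add_assoc]
  have lift_v : lift v norm_v = convolution := by
    ext x : 1
    exact lift_of norm_v x
  have h := lift_convolution norm_v v_add a b
  rw [lift_v] at h
  exact congr($h c)

theorem convolution_comm [AddCommMagma G] (a b : EllOneAlgebra 𝕜 G) :
    convolution a b = convolution b a := by
  have h : (convolution (𝕜 := 𝕜) (G := G)) = convolution.flip := by
    ext x y
    simp [add_comm x y]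
  exact congr($h a b)

theorem of_zero_convolution [AddZeroClass G] (a : EllOneAlgebra 𝕜 G) :
    convolution (of 0) a = a := by
  have h : convolution (𝕜 := 𝕜) (of (0 : G)) = .id 𝕜 _ := by ext x; simp
  exact congr($h a)

theorem convolution_of_zero [AddZeroClass G] (a : EllOneAlgebra 𝕜 G) :
    convolution a (of 0) = a := by
  have h : (convolution (𝕜 := 𝕜)).flip (of (0 : G)) = .id 𝕜 _ := by ext x; simp
  exact congr($h a)

noncomputable instance [AddMonoid G] : NormedRing (EllOneAlgebra 𝕜 G) where
  mul a b := convolution a b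
  one := of 0
  mul_assoc := convolution_assoc
  one_mul := of_zero_convolution
  mul_one := convolution_of_zero
  left_distrib a b c := map_add (convolution a) b c
  right_distrib a b c := convolution.map_add₂ a b c
  zero_mul := convolution.map_zero₂
  mul_zero a := map_zero (convolution a)
  dist_eq := NormedAddGroup.dist_eq
  norm_mul_le a b := by
    refine (convolution.le_opNorm₂ a b).trans ?_
    grw [norm_convolution_le, one_mul]

noncomputable instance [AddCommMonoid G] : NormedCommRing (EllOneAlgebra 𝕜 G) where
  mul_comm := convolution_comm

noncomputable instance [AddMonoid G] : Algebra 𝕜 (EllOneAlgebra 𝕜 G) :=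
  .ofModule (fun c a b => convolution.map_smul₂ c a b) fun c a b => map_smul (convolution a) c b

noncomputable instance [AddMonoid G] : NormedAlgebra 𝕜 (EllOneAlgebra 𝕜 G) where
  norm_smul_le := norm_smul_le

instance [AddMonoid G] : NormOneClass (EllOneAlgebra 𝕜 G) where
  norm_one := norm_of 0

theorem of_zero [AddMonoid G] : (of 0 : EllOneAlgebra 𝕜 G) = 1 := rfl

theorem of_add [AddMonoid G] (x y : G) : (of (x + y) : EllOneAlgebra 𝕜 G) = of x * of y :=
  (convolution_of_of x y).symm

/-- The algebra homomorphism with `of x ↦ χ x` for a bounded exponential `χ`, i.e. the universal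
property of `ℓ¹(G)` among Banach algebras. -/
noncomputable def liftAlgHom [AddMonoid G] {B : Type*} [NormedRing B] [NormedAlgebra 𝕜 B]
    [CompleteSpace B] {C : ℝ} (χ : AddChar G B) (hχ : ∀ x, ‖χ x‖ ≤ C) :
    EllOneAlgebra 𝕜 G →ₐ[𝕜] B :=
  AlgHom.ofLinearMap (lift χ hχ).toLinearMap
    ((lift_of hχ 0).trans χ.map_zero_eq_one) (lift_convolution hχ χ.map_add_eq_mul)

theorem liftAlgHom_of [AddMonoid G] {B : Type*} [NormedRing B] [NormedAlgebra 𝕜 B]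
    [CompleteSpace B] {C : ℝ} (χ : AddChar G B) (hχ : ∀ x, ‖χ x‖ ≤ C) (x : G) :
    liftAlgHom (𝕜 := 𝕜) χ hχ (of x) = χ x :=
  lift_of hχ x

end Convolution

section Characters

open WeakDual

theorem hasSum_apply_of {G : Type*} [AddMonoid G] (φ : characterSpace ℂ (EllOneAlgebra ℂ G))
    (a : EllOneAlgebra ℂ G) : HasSum (fun x => a x * φ (of x)) (φ a) := by
  simpa only [Function.comp_def, map_smul, smul_eq_mul] using
    a.hasSum_smul_of.map φ (map_continuous φ)

theorem norm_apply_of_le {G : Type*} [AddMonoid G] (φ : characterSpace ℂ (EllOneAlgebra ℂ G))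
    (x : G) : ‖φ (of x)‖ ≤ 1 :=
  (AlgHom.norm_apply_le_self φ (of x)).trans_eq (norm_of x)

variable {G : Type*} [AddGroup G]

theorem norm_apply_of (φ : characterSpace ℂ (EllOneAlgebra ℂ G)) (x : G) : ‖φ (of x)‖ = 1 := by
  refine (norm_apply_of_le φ x).antisymm ?_
  have of_mul_of_neg : φ (of x) * φ (of (-x)) = 1 := by
    rw [← map_mul, ← of_add, add_neg_cancel, of_zero, map_one]
  calc 1 = ‖φ (of x)‖ * ‖φ (of (-x))‖ := by rw [← norm_mul, of_mul_of_neg, norm_one]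
    _ ≤ ‖φ (of x)‖ := mul_le_of_le_one_right (norm_nonneg _) (norm_apply_of_le φ (-x))

/-- The group character obtained by restricting a character of `ℓ¹(G)` to the basis elements. -/
noncomputable def toAddChar (φ : characterSpace ℂ (EllOneAlgebra ℂ G)) : AddChar G Circle where
  toFun x := ⟨φ (of x), mem_sphere_zero_iff_norm.2 (norm_apply_of φ x)⟩
  map_zero_eq_one' := Circle.ext (map_one φ)
  map_add_eq_mul' x y := Circle.ext <| by
    change φ (of (x + y)) = φ (of x) * φ (of y)
    rw [of_add, map_mul]

theorem coe_toAddChar (φ : characterSpace ℂ (EllOneAlgebra ℂ G)) (x : G) :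
    (toAddChar φ x : ℂ) = φ (of x) := rfl

/-- The character of `ℓ¹(G)` extending a group character, i.e. the Fourier transform at `ψ`. -/
noncomputable def ofAddChar (ψ : AddChar G Circle) : characterSpace ℂ (EllOneAlgebra ℂ G) :=
  CharacterSpace.equivAlgHom.symm <|
    liftAlgHom (Circle.coeHom.compAddChar ψ) fun x => (Circle.norm_coe (ψ x)).le

theorem ofAddChar_of (ψ : AddChar G Circle) (x : G) : ofAddChar ψ (of x) = ψ x :=
  liftAlgHom_of _ (fun x => (Circle.norm_coe (ψ x)).le) x

theorem ofAddChar_toAddChar (φ : characterSpace ℂ (EllOneAlgebra ℂ G)) :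
    ofAddChar (toAddChar φ) = φ := by
  refine CharacterSpace.ext fun a => (hasSum_apply_of _ a).unique ?_
  simpa only [ofAddChar_of, coe_toAddChar] using hasSum_apply_of φ a

end Characters

end EllOneAlgebra

section Torus

variable {ι : Type*} [Fintype ι]

/-- The character `x ↦ exp (i k·x)` of `ℤ^ι` attached to a point `k` of the torus; `k` ranges over
all of `ℝ^ι`, so points equal modulo `2π` give the same character. -/
noncomputable def torusChar (k : ι → ℝ) : AddChar (ι → ℤ) Circle where
  toFun x := Circle.exp (∑ i, k i * x i)
  map_zero_eq_one' := by simp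
  map_add_eq_mul' x y := by
    simp only [Pi.add_apply, Int.cast_add, mul_add, Finset.sum_add_distrib, Circle.exp_add]

theorem coe_torusChar (k : ι → ℝ) (x : ι → ℤ) :
    (torusChar k x : ℂ) = exp (I * ∑ i, (k i : ℂ) * (x i : ℂ)) := by
  simp [torusChar, mul_comm I]

theorem torusChar_surjective : Function.Surjective (torusChar (ι := ι)) := by
  classical
  intro ψ
  refine ⟨fun i => arg (ψ (Pi.single i 1)), ?_⟩
  apply AddChar.toAddMonoidHomEquiv.injective
  ext i
  simp [torusChar, Pi.single_apply]

end Torus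

theorem eq_inv_one_add_exp_log {z : ℂ} (hz : (1 - z) / z ≠ 0) :
    z = (1 + exp (log ((1 - z) / z)))⁻¹ := by
  have hz0 : z ≠ 0 := (div_ne_zero_iff.1 hz).2
  rw [exp_log hz]
  field_simp
  ring

theorem ofReal_one_sub_div_mem_slitPlane {x : ℝ} (hx : x ∈ Ioo 0 1) :
    (1 - (x : ℂ)) / x ∈ slitPlane := by
  exact_mod_cast ofReal_mem_slitPlane.2 (div_pos (sub_pos.2 hx.2) hx.1)

theorem log_ofReal_one_sub_div {x : ℝ} (hx : x ∈ Ioo 0 1) :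
    log ((1 - (x : ℂ)) / x) = Real.log ((1 - x) / x) := by
  rw [ofReal_log (div_pos (sub_pos.2 hx.2) hx.1).le]
  push_cast
  rfl

theorem stmt16_general {ι : Type*} [Fintype ι] (f : (ι → ℝ) → ℂ) (a : (ι → ℤ) → ℂ)
    (ha : Summable fun x => ‖a x‖)
    (hf : ∀ k : ι → ℝ, f k = ∑' x : ι → ℤ, a x * exp (I * ∑ i, (k i : ℂ) * (x i : ℂ)))
    (hrange : ∀ k, (1 - f k) / f k ∈ slitPlane) :
    ∃ b : (ι → ℤ) → ℂ,
      Summable (fun x => ‖b x‖) ∧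
      (∀ k : ι → ℝ, log ((1 - f k) / f k) =
        ∑' x : ι → ℤ, b x * exp (I * ∑ i, (k i : ℂ) * (x i : ℂ))) ∧
      ∀ k : ι → ℝ, f k = (1 + exp (log ((1 - f k) / f k)))⁻¹ := by
  let F := EllOneAlgebra.ofSummable a ha
  have apply_torusChar (G : EllOneAlgebra ℂ (ι → ℤ)) (k : ι → ℝ) :
      EllOneAlgebra.ofAddChar (torusChar k) G =
        ∑' x, G x * exp (I * ∑ i, (k i : ℂ) * (x i : ℂ)) := by
    simp only [← (EllOneAlgebra.hasSum_apply_of _ G).tsum_eq, EllOneAlgebra.ofAddChar_of,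
      coe_torusChar]
  have apply_F (k : ι → ℝ) : EllOneAlgebra.ofAddChar (torusChar k) F = f k :=
    (apply_torusChar F k).trans (hf k).symm
  obtain ⟨g, hg⟩ := exists_forall_character_eq_log_one_sub_div (a := F) fun φ => by
    obtain ⟨k, hk⟩ := torusChar_surjective (EllOneAlgebra.toAddChar φ)
    rw [← EllOneAlgebra.ofAddChar_toAddChar φ, ← hk, apply_F]
    exact hrange k
  refine ⟨g, g.hasSum_norm.summable, fun k => ?_, fun k => ?_⟩
  · rw [← apply_torusChar g k, hg, apply_F]
  · exact eq_inv_one_add_exp_log (slitPlane_ne_zero (hrange k))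

/-- Wiener–Lévy theorem applied to `m(z) = log((1-z)/z)`: if `f` lies in the
Wiener algebra of `𝕋^d` (absolutely convergent Fourier series) with
`f(𝕋^d) ⊂ (0,1)`, then `g = m ∘ f` is again in the Wiener algebra, real-valued,
and `f(k) = (1 + e^{g(k)})⁻¹` for all `k`. -/
theorem stmt16 {d : ℕ} (f : (Fin d → ℝ) → ℝ) (a : (Fin d → ℤ) → ℂ)
    (ha : Summable fun x => ‖a x‖)
    (hf : ∀ k : Fin d → ℝ,
      (f k : ℂ) = ∑' x : Fin d → ℤ, a x * Complex.exp (Complex.I * ∑ i, (k i : ℂ) * (x i : ℂ)))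
    (hrange : ∀ k, f k ∈ Ioo (0 : ℝ) 1) :
    ∃ b : (Fin d → ℤ) → ℂ,
      Summable (fun x => ‖b x‖) ∧
      (∀ k : Fin d → ℝ,
        (Real.log ((1 - f k) / f k) : ℂ)
          = ∑' x : Fin d → ℤ, b x * Complex.exp (Complex.I * ∑ i, (k i : ℂ) * (x i : ℂ))) ∧
      (∀ k : Fin d → ℝ, f k = (1 + Real.exp (Real.log ((1 - f k) / f k)))⁻¹) := by
  obtain ⟨b, hb, hlog, hinv⟩ := stmt16_general (fun k => (f k : ℂ)) a ha hf fun k =>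
    ofReal_one_sub_div_mem_slitPlane (hrange k)
  simp only [log_ofReal_one_sub_div (hrange _)] at hlog hinv
  exact ⟨b, hb, hlog, fun k => by exact_mod_cast hinv k⟩
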